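/- arXiv:1701.02522 — 2 statements merged into one kernel-verified Lean document; each statement's English description precedes it below -/
import Mathlib

section
/- Let N be a positive integer, let A⁰ and A¹ be the (N+1)×(N+1) isomerisation matrices, let f : ℝ → ℝ be continuous, and set 𝒜(s) = A⁰ + f(s)·A¹ (a matrix-valued function of s). Then for every t ≥ 0 the second term of the Magnus expansion evaluates to a multiple of A¹: ∫₀ᵗ [ ∫₀ˢ 𝒜(r) dr , 𝒜(s) ] ds = ( 2 ∫₀ᵗ (t − 2x) f(x) dx ) · A¹, where [X,Y] = XY − YX denotes the matrix commutator and matrix-valued integrals are taken entrywise. -/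
/-!
The matrices live in a representation of `sl₂`. Let `U` and `D` be the superdiagonal and subdiagonal
parts of `A⁰`, and `H` the diagonal part of `A¹`. Then `[U, D] = H`, `[H, U] = 2U`, `[H, D] = -2D`,
while `A⁰ = -N + U + D` and `A¹ = H + U - D`. Hence `[A⁰, A¹] = -2 A¹` (`isoA0_commutator_isoA1`).

With `F(s) = ∫₀ˢ f`, the inner integral is `s A⁰ + F(s) A¹`, so the commutator at time `s` is
`2 (F(s) - s f(s)) A¹`. Integration by parts gives `∫₀ᵗ F = ∫₀ᵗ (t - x) f(x) dx`
(`integral_primitive_sub`), which yields the stated coefficient.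
-/

open intervalIntegral

def isoA0 (N : ℕ) : Matrix (Fin (N+1)) (Fin (N+1)) ℝ := fun k l =>
  if (k : ℕ) = (l : ℕ) then -(N : ℝ)
  else if (k : ℕ) + 1 = (l : ℕ) then ((l : ℕ) : ℝ)
  else if (k : ℕ) = (l : ℕ) + 1 then (N : ℝ) - ((l : ℕ) : ℝ)
  else 0

def isoA1 (N : ℕ) : Matrix (Fin (N+1)) (Fin (N+1)) ℝ := fun k l =>
  if (k : ℕ) = (l : ℕ) then (N : ℝ) - 2 * ((l : ℕ) : ℝ)
  else if (k : ℕ) + 1 = (l : ℕ) then ((l : ℕ) : ℝ)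
  else if (k : ℕ) = (l : ℕ) + 1 then -(N : ℝ) + ((l : ℕ) : ℝ)
  else 0

/-- Entrywise interval integral of a matrix-valued function. -/
noncomputable def matIntegral {n : ℕ} (f : ℝ → Matrix (Fin n) (Fin n) ℝ) (a b : ℝ) :
    Matrix (Fin n) (Fin n) ℝ :=
  fun i j => ∫ x in a..b, f x i j

/-- The raising operator: the superdiagonal part of `A⁰`. -/
def isoU (N : ℕ) : Matrix (Fin (N+1)) (Fin (N+1)) ℝ := fun k l =>
  if (k : ℕ) + 1 = (l : ℕ) then ((l : ℕ) : ℝ) else 0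

/-- The lowering operator: the subdiagonal part of `A⁰`. -/
def isoD (N : ℕ) : Matrix (Fin (N+1)) (Fin (N+1)) ℝ := fun k l =>
  if (k : ℕ) = (l : ℕ) + 1 then (N : ℝ) - ((l : ℕ) : ℝ) else 0

/-- The weight operator: the diagonal part of `A¹`. -/
def isoH (N : ℕ) : Matrix (Fin (N+1)) (Fin (N+1)) ℝ :=
  Matrix.diagonal fun l => (N : ℝ) - 2 * ((l : ℕ) : ℝ)

lemma isoA0_eq (N : ℕ) : isoA0 N = (-(N : ℝ)) • 1 + isoU N + isoD N := by
  ext k l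
  simp only [isoA0, isoU, isoD, Matrix.add_apply, Matrix.smul_apply, Matrix.one_apply, Fin.ext_iff,
    smul_eq_mul]
  split_ifs <;> first | omega | simp

lemma isoA1_eq (N : ℕ) : isoA1 N = isoH N + isoU N - isoD N := by
  ext k l
  simp only [isoA1, isoU, isoD, isoH, Matrix.add_apply, Matrix.sub_apply, Matrix.diagonal_apply,
    Fin.ext_iff]
  split_ifs with h1 h2 h3 <;> first | omega | ring1 | (rw [h1]; ring1)

/-- At `k = N` every term of the sum vanishes, in agreement with the factor `N - k`. -/
lemma isoU_mul_isoD (N : ℕ) :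
    isoU N * isoD N = Matrix.diagonal fun k : Fin (N+1) => ((k : ℕ) + 1 : ℝ) * ((N : ℝ) - ((k : ℕ) : ℝ)) := by
  ext k l
  rw [Matrix.mul_apply, Matrix.diagonal_apply]
  by_cases hk : (k : ℕ) < N
  · rw [Finset.sum_eq_single (⟨k + 1, by omega⟩ : Fin (N+1))]
    · by_cases h : k = l
      · subst h; simp [isoU, isoD]
      · have : (k : ℕ) ≠ l := fun e => h (Fin.ext e)
        simp [isoD, h, this]
    · intro j _ hj
      have : (k : ℕ) + 1 ≠ j := fun e => hj (Fin.ext e.symm)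
      simp [isoU, this]
    · simp
  · have hkN : (k : ℕ) = N := by omega
    rw [Finset.sum_eq_zero]
    · simp [hkN]
    · intro j _
      have : (k : ℕ) + 1 ≠ j := by omega
      simp [isoU, this]

/-- At `k = 0` every term of the sum vanishes, in agreement with the factor `k`. -/
lemma isoD_mul_isoU (N : ℕ) :
    isoD N * isoU N =
      Matrix.diagonal fun k : Fin (N+1) => ((k : ℕ) : ℝ) * ((N : ℝ) - ((k : ℕ) : ℝ) + 1) := by
  ext k l
  rw [Matrix.mul_apply, Matrix.diagonal_apply]
  by_cases hk : 0 < (k : ℕ)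
  · obtain ⟨m, hm⟩ : ∃ m, (k : ℕ) = m + 1 := ⟨k - 1, by omega⟩
    rw [Finset.sum_eq_single (⟨m, by omega⟩ : Fin (N+1))]
    · by_cases h : k = l
      · subst h; simp [isoU, isoD, hm]; ring
      · have : m + 1 ≠ l := fun e => h (Fin.ext (hm.trans e))
        simp [isoU, h, this]
    · intro j _ hj
      have : (k : ℕ) ≠ j + 1 := fun e => hj (Fin.ext (by simp; omega))
      simp [isoD, this]
    · simp
  · have hk0 : (k : ℕ) = 0 := by omega
    rw [Finset.sum_eq_zero]
    · simp [hk0]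
    · intro j _
      have : (k : ℕ) ≠ j + 1 := by omega
      simp [isoD, this]

lemma isoU_commutator_isoD (N : ℕ) : isoU N * isoD N - isoD N * isoU N = isoH N := by
  rw [isoU_mul_isoD, isoD_mul_isoU, Matrix.diagonal_sub, isoH]
  congr 1
  funext k
  ring

lemma isoH_commutator_isoU (N : ℕ) :
    isoH N * isoU N - isoU N * isoH N = (2 : ℝ) • isoU N := by
  ext k l
  simp only [isoH, Matrix.sub_apply, Matrix.diagonal_mul, Matrix.mul_diagonal, Matrix.smul_apply,
    smul_eq_mul, isoU]
  split_ifs with h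
  · rw [← h]; push_cast; ring
  · ring

lemma isoH_commutator_isoD (N : ℕ) :
    isoH N * isoD N - isoD N * isoH N = (-2 : ℝ) • isoD N := by
  ext k l
  simp only [isoH, Matrix.sub_apply, Matrix.diagonal_mul, Matrix.mul_diagonal, Matrix.smul_apply,
    smul_eq_mul, isoD]
  split_ifs with h
  · rw [h]; push_cast; ring
  · ring

lemma isoA0_commutator_isoA1 (N : ℕ) :
    isoA0 N * isoA1 N - isoA1 N * isoA0 N = (-2 : ℝ) • isoA1 N := by
  have h1 := isoU_commutator_isoD N
  have h2 := isoH_commutator_isoU N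
  have h3 := isoH_commutator_isoD N
  rw [isoA0_eq, isoA1_eq]
  calc _ = -(isoH N * isoU N - isoU N * isoH N) - (isoH N * isoD N - isoD N * isoH N)
        - (2 : ℝ) • (isoU N * isoD N - isoD N * isoU N) := by
        simp only [add_mul, mul_add, sub_mul, mul_sub, smul_mul_assoc, mul_smul_comm, one_mul,
          mul_one, smul_add, smul_sub, two_smul]
        abel
    _ = _ := by rw [h1, h2, h3]; module

/-- Integration by parts: `∫₀ᵗ (∫₀ˢ f - s f(s)) ds = ∫₀ᵗ (t - 2x) f(x) dx`. -/
lemma integral_primitive_sub (f : ℝ → ℝ) (hf : Continuous f) (t : ℝ) :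
    ∫ s in (0:ℝ)..t, ((∫ r in (0:ℝ)..s, f r) - s * f s) = ∫ x in (0:ℝ)..t, (t - 2 * x) * f x := by
  have hF : Continuous fun s => ∫ r in (0:ℝ)..s, f r :=
    intervalIntegral.continuous_primitive (fun a b => hf.intervalIntegrable a b) 0
  have hd : ∀ s, HasDerivAt (fun s => ∫ r in (0:ℝ)..s, f r) (f s) s := fun s =>
    hf.integral_hasStrictDerivAt 0 s |>.hasDerivAt
  -- the derivative of `(s - t) F(s)`, which vanishes at both endpoints, is `F(s) + (s - t) f(s)`
  have key : ∫ s in (0:ℝ)..t, ((∫ r in (0:ℝ)..s, f r) + (s - t) * f s) = 0 := by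
    rw [integral_eq_sub_of_hasDerivAt (f := fun s => (s - t) * ∫ r in (0:ℝ)..s, f r)]
    · simp
    · intro s _
      simpa using ((hasDerivAt_id s).sub_const t).fun_mul (hd s)
    · exact Continuous.intervalIntegrable (by fun_prop) _ _
  rw [← sub_eq_zero, ← integral_sub]
  · refine Eq.trans ?_ key
    congr 1
    funext s
    ring
  · exact Continuous.intervalIntegrable (by fun_prop) _ _
  · exact Continuous.intervalIntegrable (by fun_prop) _ _

/-- The second term of the Magnus expansion for the isomerisation master equation,
`∫₀ᵗ [∫₀ˢ 𝒜(r) dr, 𝒜(s)] ds` with `𝒜(s) = A⁰ + f(s)·A¹`, equals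
`(2 ∫₀ᵗ (t - 2x) f(x) dx) · A¹`. -/
theorem magnus_second_term_isomerisation (N : ℕ) (hN : 0 < N)
    (f : ℝ → ℝ) (hf : Continuous f) (t : ℝ) (ht : 0 ≤ t) :
    matIntegral (fun s =>
        (matIntegral (fun r => isoA0 N + f r • isoA1 N) 0 s) * (isoA0 N + f s • isoA1 N)
        - (isoA0 N + f s • isoA1 N) * (matIntegral (fun r => isoA0 N + f r • isoA1 N) 0 s)) 0 t
      = (2 * ∫ x in (0:ℝ)..t, (t - 2 * x) * f x) • isoA1 N := by
  have hin : ∀ s, matIntegral (fun r => isoA0 N + f r • isoA1 N) 0 s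
      = s • isoA0 N + (∫ r in (0:ℝ)..s, f r) • isoA1 N := by
    intro s
    ext i j
    simp only [matIntegral, Matrix.add_apply, Matrix.smul_apply, smul_eq_mul]
    have hint : IntervalIntegrable (fun r => f r * isoA1 N i j) MeasureTheory.volume 0 s :=
      Continuous.intervalIntegrable (by fun_prop) _ _
    rw [integral_add intervalIntegrable_const hint, intervalIntegral.integral_mul_const]
    simp
  have hcomm : ∀ s, (s • isoA0 N + (∫ r in (0:ℝ)..s, f r) • isoA1 N) * (isoA0 N + f s • isoA1 N)
      - (isoA0 N + f s • isoA1 N) * (s • isoA0 N + (∫ r in (0:ℝ)..s, f r) • isoA1 N)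
      = (2 * ((∫ r in (0:ℝ)..s, f r) - s * f s)) • isoA1 N := by
    intro s
    generalize (∫ r in (0:ℝ)..s, f r) = c
    calc _ = (s * f s - c) • (isoA0 N * isoA1 N - isoA1 N * isoA0 N) := by
          simp only [add_mul, mul_add, smul_mul_assoc, mul_smul_comm]
          module
      _ = _ := by rw [isoA0_commutator_isoA1]; module
  simp only [hin, hcomm]
  ext i j
  simp only [matIntegral, Matrix.smul_apply, smul_eq_mul]
  rw [intervalIntegral.integral_mul_const, intervalIntegral.integral_const_mul,
    integral_primitive_sub f hf t]
end

section
/- Let N be a positive integer and let A⁰ be the (N+1)×(N+1) isomerisation matrix. Then the spectrum of A⁰, regarded as a complex matrix, is exactly the set { −2r : r = 0, 1, …, N }; that is, a complex number λ is an eigenvalue of A⁰ if and only if λ = −2r for some integer r with 0 ≤ r ≤ N. -/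
open Polynomial

/-- The generating polynomial `(1 + X) ^ a * (1 - X) ^ b` of an eigenvector of `A⁰` for the
eigenvalue `-2b`, where `N = a + b`. -/
noncomputable def isoPoly (a b : ℕ) : ℂ[X] := (1 + X) ^ a * (1 - X) ^ b

lemma isoPoly_ode (a b : ℕ) :
    derivative (isoPoly a b) + C ((a : ℂ) + b) * (X * isoPoly a b)
      - X * (X * derivative (isoPoly a b)) - C ((a : ℂ) + b) * isoPoly a b
      = C (-2 * (b : ℂ)) * isoPoly a b := by
  have h1 : (1 + X) * derivative ((1 + X : ℂ[X]) ^ a) = (a : ℂ[X]) * (1 + X) ^ a := by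
    cases a with
    | zero => simp
    | succ n => simp [derivative_pow]; ring
  have h2 : (1 - X) * derivative ((1 - X : ℂ[X]) ^ b) = -(b : ℂ[X]) * (1 - X) ^ b := by
    cases b with
    | zero => simp
    | succ n => simp [derivative_pow]; ring
  simp only [isoPoly, derivative_mul, map_add, map_mul, map_neg, map_natCast, map_ofNat]
  linear_combination (1 - X) * (1 - X) ^ b * h1 + (1 + X) * (1 + X) ^ a * h2

lemma isoPoly_natDegree_le (a b : ℕ) : (isoPoly a b).natDegree ≤ a + b := by
  unfold isoPoly
  compute_degree

lemma isoPoly_coeff_zero (a b : ℕ) : (isoPoly a b).coeff 0 = 1 := by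
  simp [isoPoly, coeff_zero_eq_eval_zero]

/-- The tridiagonal action of `A⁰` on a sequence `q`; the hypothesis `q (N + 1) = 0` allows row `N`
to be written like the others. -/
lemma isoA0_mulVec (N : ℕ) (q : ℕ → ℂ) (hq : q (N + 1) = 0) (k : Fin (N + 1)) :
    ((isoA0 N).map (algebraMap ℝ ℂ)).mulVec (fun l : Fin (N + 1) => q l) k
      = -(N : ℂ) * q k + ((k : ℕ) + 1) * q (k + 1)
        + (if (k : ℕ) = 0 then 0 else ((N : ℂ) - ((k : ℕ) - 1 : ℕ)) * q ((k : ℕ) - 1)) := by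
  obtain ⟨k, hk⟩ := k
  have key : ∀ l : Fin (N + 1),
      ((isoA0 N).map (algebraMap ℝ ℂ)) ⟨k, hk⟩ l * q l
        = (fun l : ℕ => (if k = l then -(N : ℂ) * q l else 0)
            + (if k + 1 = l then (l : ℂ) * q l else 0)
            + (if k = l + 1 then ((N : ℂ) - l) * q l else 0)) l := by
    rintro ⟨l, hl⟩
    simp only [isoA0, Matrix.map_apply]
    split_ifs <;> first | omega | simp
  simp only [Matrix.mulVec, dotProduct]
  rw [Finset.sum_congr rfl (fun l _ => key l), Fin.sum_univ_eq_sum_range (fun l : ℕ =>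
    (if k = l then -(N : ℂ) * q l else 0) + (if k + 1 = l then (l : ℂ) * q l else 0)
      + (if k = l + 1 then ((N : ℂ) - l) * q l else 0)) (N + 1),
    Finset.sum_add_distrib, Finset.sum_add_distrib, Finset.sum_ite_eq, Finset.sum_ite_eq,
    if_pos (Finset.mem_range.2 hk)]
  congr 1
  · congr 1
    split_ifs with h
    · push_cast; rfl
    · have : k = N := by simp at h; omega
      subst this
      simp [hq]
  · cases k with
    | zero => simp
    | succ k =>
      simp only [Nat.add_right_cancel_iff, Finset.sum_ite_eq]
      rw [if_pos (Finset.mem_range.2 (by omega))]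
      simp

lemma isoA0_eigen (N r : ℕ) (hr : r ≤ N) :
    ∃ v : Fin (N + 1) → ℂ, v ≠ 0 ∧
      ((isoA0 N).map (algebraMap ℝ ℂ)).mulVec v = (-2 * (r : ℂ)) • v := by
  obtain ⟨a, rfl⟩ := Nat.exists_eq_add_of_le' hr
  refine ⟨fun l => (isoPoly a r).coeff l, fun h => ?_, ?_⟩
  · simpa [isoPoly_coeff_zero] using congrFun h 0
  · funext k
    rw [isoA0_mulVec (a + r) (fun l => (isoPoly a r).coeff l)
      (coeff_eq_zero_of_natDegree_lt (by have := isoPoly_natDegree_le a r; omega))]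
    have h := congrArg (fun p => coeff p k) (isoPoly_ode a r)
    obtain ⟨k, hk⟩ := k
    simp only [coeff_add, coeff_sub, coeff_C_mul, coeff_derivative] at h
    simp only [Pi.smul_apply, smul_eq_mul]
    rw [← h]
    rcases k with _ | _ | k
    · simp; ring
    · simp [coeff_X_mul, coeff_derivative]; ring
    · simp [coeff_X_mul, coeff_derivative]; ring

/-- The spectrum of `A⁰` (regarded as a complex matrix) is `{−2r : r = 0,…,N}`:
a complex number `λ` is an eigenvalue of `A⁰` iff `λ = −2r` for some `0 ≤ r ≤ N`. -/
theorem spectrum_isoA0 (N : ℕ) (hN : 0 < N) (lam : ℂ) :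
    (∃ v : Fin (N+1) → ℂ, v ≠ 0 ∧
        ((isoA0 N).map (algebraMap ℝ ℂ)).mulVec v = lam • v)
      ↔ ∃ r : ℕ, r ≤ N ∧ lam = -2 * (r : ℂ) := by
  constructor
  · rintro ⟨v, hv, hv'⟩
    by_contra! hne
    choose w hw hw' using fun r : Fin (N + 1) => isoA0_eigen N r (by omega)
    -- The index `none` stands for the hypothetical extra eigenvalue `lam`.
    let μ : Option (Fin (N + 1)) → ℂ := fun o => o.elim lam (fun r => -2 * ((r : ℕ) : ℂ))
    let u : Option (Fin (N + 1)) → Fin (N + 1) → ℂ := fun o => o.elim v w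
    have hμ : Function.Injective μ := by
      rintro (_ | r) (_ | s) h
      · rfl
      · exact absurd h (hne s (by omega))
      · exact absurd h.symm (hne r (by omega))
      · simpa [μ, Fin.val_inj] using h
    have hu : ∀ o, Module.End.HasEigenvector
        (Matrix.toLin' ((isoA0 N).map (algebraMap ℝ ℂ))) (μ o) (u o) := by
      rintro (_ | r)
      · exact ⟨Module.End.mem_eigenspace_iff.2 hv', hv⟩
      · exact ⟨Module.End.mem_eigenspace_iff.2 (hw' r), hw r⟩
    have := (Module.End.eigenvectors_linearIndependent' _ μ hμ u hu).fintype_card_le_finrank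
    simp at this
  · rintro ⟨r, hr, rfl⟩
    exact isoA0_eigen N r hr
end
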